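/- arXiv:1703.07258 — 4 statements merged into one kernel-verified Lean document; each statement's English description precedes it below -/
import Mathlib

section
/- For all real parameters M > 0 and l > 0, the function F(r) = 1 - 2M/r + r²/l² has exactly one zero in (0,∞), and this zero equals p₊ + p₋, where p± = (M l² ± (M² l⁴ + l⁶/27)^{1/2})^{1/3}. -/
noncomputable section

/-- The metric coefficient `F(r) = 1 - 2M/r + r²/l²`. -/
def Fsads (M l r : ℝ) : ℝ := 1 - 2*M/r + r^2/l^2

/-- Real (sign-preserving) cube root. -/
def cbrt (x : ℝ) : ℝ := if 0 ≤ x then x ^ ((1:ℝ)/3) else -((-x) ^ ((1:ℝ)/3))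

/-- `p₊ + p₋` with `p± = (M l² ± (M² l⁴ + l⁶/27)^{1/2})^{1/3}`. -/
def rSAdS (M l : ℝ) : ℝ :=
  cbrt (M*l^2 + Real.sqrt (M^2*l^4 + l^6/27)) + cbrt (M*l^2 - Real.sqrt (M^2*l^4 + l^6/27))

theorem cbrt_cube (x : ℝ) : cbrt x ^ 3 = x := by
  have key : ∀ y : ℝ, 0 ≤ y → (y ^ ((1:ℝ)/3)) ^ 3 = y := by
    intro y hy
    rw [← Real.rpow_natCast, ← Real.rpow_mul hy]
    norm_num
  unfold cbrt
  split_ifs with h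
  · exact key x h
  · have := key (-x) (by linarith)
    rw [Odd.neg_pow (by decide), this]
    ring

theorem Fsads_iff (M l r : ℝ) (hl : 0 < l) (hr : 0 < r) :
    Fsads M l r = 0 ↔ r^3 + l^2*r = 2*M*l^2 := by
  have e : Fsads M l r = (r^3 + l^2*r - 2*M*l^2) / (r*l^2) := by
    unfold Fsads
    field_simp
    ring
  have h : r*l^2 ≠ 0 := by positivity
  rw [e, div_eq_zero_iff, or_iff_left h, sub_eq_zero]

theorem rSAdS_cubic (M l : ℝ) :
    (rSAdS M l)^3 + l^2*(rSAdS M l) = 2*M*l^2 := by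
  unfold rSAdS
  have hs := Real.sq_sqrt (show 0 ≤ M^2*l^4 + l^6/27 by positivity)
  set s := Real.sqrt (M^2*l^4 + l^6/27)
  have ha := cbrt_cube (M*l^2 + s)
  have hb := cbrt_cube (M*l^2 - s)
  set a := cbrt (M*l^2 + s)
  set b := cbrt (M*l^2 - s)
  have hab : a*b = -(l^2/3) := by
    have h3 : (a*b)^3 = (-(l^2/3))^3 := by
      rw [mul_pow, ha, hb]
      linear_combination -hs
    exact (Odd.strictMono_pow (R := ℝ) (n := 3) (by decide)).injective h3
  linear_combination ha + hb + 3*(a+b)*hab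

/-- For all `M > 0`, `l > 0`, the function `F` has exactly one zero in `(0,∞)`,
and this zero equals `p₊ + p₋`. -/
theorem stmt0 (M l : ℝ) (hM : 0 < M) (hl : 0 < l) :
    (∃! r : ℝ, 0 < r ∧ Fsads M l r = 0) ∧
    (0 < rSAdS M l ∧ Fsads M l (rSAdS M l) = 0) := by
  have hc := rSAdS_cubic M l
  have hpos : 0 < rSAdS M l := by
    by_contra hn
    have h1 : 0 < 2*M*l^2 := by positivity
    have h2 : rSAdS M l * ((rSAdS M l)^2 + l^2) ≤ 0 :=
      mul_nonpos_of_nonpos_of_nonneg (not_lt.mp hn) (by positivity)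
    nlinarith
  have hz := (Fsads_iff M l _ hl hpos).2 hc
  refine ⟨⟨rSAdS M l, ⟨hpos, hz⟩, ?_⟩, hpos, hz⟩
  rintro y ⟨hy, hy0⟩
  have hyc := (Fsads_iff M l y hl hy).1 hy0
  set r := rSAdS M l
  have h : (y - r) * (y^2 + y*r + r^2 + l^2) = 0 := by
    linear_combination hyc - hc
  have hne : y^2 + y*r + r^2 + l^2 ≠ 0 := by positivity
  exact sub_eq_zero.1 ((mul_eq_zero.1 h).resolve_right hne)
end
end

section
/- The function s ↦ 1/F(s) is integrable on (r₀,∞) for every r₀ > r_SAdS, and the Regge–Wheeler coordinate x(r) = -∫_r^∞ F(s)^{-1} ds is a strictly increasing differentiable bijection from (r_SAdS,∞) onto (-∞,0) with derivative x'(r) = 1/F(r); moreover x(r) → -∞ as r → r_SAdS⁺ and x(r) → 0 as r → ∞. -/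
open MeasureTheory Filter

noncomputable section

/-- The Regge–Wheeler coordinate `x(r) = -∫_r^∞ F(s)⁻¹ ds`. -/
def xcoord (M l r : ℝ) : ℝ := -∫ s in Set.Ioi r, (Fsads M l s)⁻¹

lemma F_factor (M l rS : ℝ) (hl : 0 < l) (hrS0 : 0 < rS) (hrS : Fsads M l rS = 0)
    (s : ℝ) (hs : 0 < s) :
    Fsads M l s = (s - rS) * (1 + (s^2 + s*rS + rS^2)/l^2) / s := by
  have h2 : 2*M = rS + rS^3/l^2 := by
    unfold Fsads at hrS
    field_simp at hrS ⊢
    linarith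
  unfold Fsads
  rw [h2]
  field_simp
  ring

lemma F_pos (M l rS : ℝ) (hl : 0 < l) (hrS0 : 0 < rS) (hrS : Fsads M l rS = 0)
    (s : ℝ) (hs : rS < s) : 0 < Fsads M l s := by
  have h0 : 0 < s := hrS0.trans hs
  have h1 : 0 < s - rS := sub_pos.2 hs
  rw [F_factor M l rS hl hrS0 hrS s h0]
  positivity

lemma F_cont (M l s : ℝ) (hs : 0 < s) : ContinuousAt (Fsads M l) s := by
  unfold Fsads
  have := hs.ne'
  fun_prop (disch := assumption)

lemma Finv_cont (M l rS : ℝ) (hl : 0 < l) (hrS0 : 0 < rS) (hrS : Fsads M l rS = 0)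
    (s : ℝ) (hs : rS < s) : ContinuousAt (fun s => (Fsads M l s)⁻¹) s :=
  (F_cont M l s (hrS0.trans hs)).inv₀ (F_pos M l rS hl hrS0 hrS s hs).ne'

lemma F_int (M l rS : ℝ) (hl : 0 < l) (hrS0 : 0 < rS) (hrS : Fsads M l rS = 0)
    (a : ℝ) (ha : rS < a) : IntegrableOn (fun s => (Fsads M l s)⁻¹) (Set.Ioi a) := by
  have ha0 : 0 < a := hrS0.trans ha
  have hg : IntegrableOn (fun s : ℝ => (l^2 * a / (a - rS)) * s ^ (-2:ℝ)) (Set.Ioi a) :=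
    (integrableOn_Ioi_rpow_of_lt (by norm_num) ha0).const_mul _
  refine Integrable.mono' hg ?_ ?_
  · refine ContinuousOn.aestronglyMeasurable (fun s hs => ?_) measurableSet_Ioi
    exact (Finv_cont M l rS hl hrS0 hrS s (ha.trans hs)).continuousWithinAt
  · refine (ae_restrict_iff' measurableSet_Ioi).2 (Eventually.of_forall fun s hs => ?_)
    have hs : a < s := hs
    have h0 : 0 < s := ha0.trans hs
    have hp := F_pos M l rS hl hrS0 hrS s (ha.trans hs)
    have h1 : 0 < a - rS := sub_pos.2 ha
    rw [Real.norm_of_nonneg (inv_pos.2 hp).le, Real.rpow_neg h0.le, Real.rpow_two]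
    have : l^2 * a / (a - rS) * (s^2)⁻¹ = ((a - rS) * s^2 / (l^2 * a))⁻¹ := by
      field_simp
    rw [this]
    refine inv_anti₀ (by positivity) ?_
    rw [F_factor M l rS hl hrS0 hrS s h0]
    have e1 : (a - rS) * s / a ≤ s - rS := by
      rw [div_le_iff₀ ha0]; nlinarith
    have e2 : s / l^2 ≤ (1 + (s^2 + s*rS + rS^2)/l^2) / s := by
      rw [le_div_iff₀ h0]
      have : 0 ≤ (s*rS + rS^2)/l^2 := by positivity
      have e3 : 1 + (s^2 + s*rS + rS^2)/l^2 = 1 + s/l^2*s + (s*rS + rS^2)/l^2 := by ring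
      linarith
    calc (a - rS) * s^2 / (l^2 * a) = ((a - rS) * s / a) * (s / l^2) := by
          field_simp
      _ ≤ (s - rS) * ((1 + (s^2 + s*rS + rS^2)/l^2) / s) :=
          mul_le_mul e1 e2 (by positivity) (by linarith)
      _ = _ := by ring

lemma x_eq (M l rS : ℝ) (hl : 0 < l) (hrS0 : 0 < rS) (hrS : Fsads M l rS = 0)
    (a r : ℝ) (ha : rS < a) (hr : rS < r) :
    xcoord M l r = xcoord M l a + ∫ s in a..r, (Fsads M l s)⁻¹ := by
  have := intervalIntegral.integral_interval_add_Ioi (F_int M l rS hl hrS0 hrS a ha)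
    (F_int M l rS hl hrS0 hrS r hr)
  unfold xcoord
  linarith

lemma x_deriv (M l rS : ℝ) (hl : 0 < l) (hrS0 : 0 < rS) (hrS : Fsads M l rS = 0)
    (r : ℝ) (hr : rS < r) : HasDerivAt (xcoord M l) (Fsads M l r)⁻¹ r := by
  have hc : ContinuousOn (fun s => (Fsads M l s)⁻¹) (Set.Ioi rS) := fun s hs =>
    (Finv_cont M l rS hl hrS0 hrS s hs).continuousWithinAt
  have h := intervalIntegral.integral_hasDerivAt_right
    (f := fun s => (Fsads M l s)⁻¹) (a := r) (b := r) (by simp)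
    (hc.stronglyMeasurableAtFilter isOpen_Ioi r hr)
    (Finv_cont M l rS hl hrS0 hrS r hr)
  refine (h.const_add (xcoord M l r)).congr_of_eventuallyEq ?_
  filter_upwards [Ioi_mem_nhds hr] with u hu
  exact x_eq M l rS hl hrS0 hrS r u hr hu

lemma x_mono (M l rS : ℝ) (hl : 0 < l) (hrS0 : 0 < rS) (hrS : Fsads M l rS = 0) :
    StrictMonoOn (xcoord M l) (Set.Ioi rS) := by
  refine strictMonoOn_of_deriv_pos (convex_Ioi rS) (fun r hr =>
    (x_deriv M l rS hl hrS0 hrS r hr).continuousAt.continuousWithinAt) fun r hr => ?_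
  rw [interior_Ioi] at hr
  rw [(x_deriv M l rS hl hrS0 hrS r hr).deriv]
  exact inv_pos.2 (F_pos M l rS hl hrS0 hrS r hr)

lemma x_top (M l rS : ℝ) (hl : 0 < l) (hrS0 : 0 < rS) (hrS : Fsads M l rS = 0) :
    Tendsto (xcoord M l) atTop (nhds 0) := by
  have ha : rS < rS + 1 := by linarith
  have h := (intervalIntegral_tendsto_integral_Ioi (rS+1)
    (F_int M l rS hl hrS0 hrS _ ha) tendsto_id).const_add (xcoord M l (rS+1))
  have e : xcoord M l (rS+1) + ∫ s in Set.Ioi (rS+1), (Fsads M l s)⁻¹ = 0 := by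
    unfold xcoord; ring
  rw [e] at h
  refine h.congr' ?_
  filter_upwards [eventually_gt_atTop rS] with r hr
  exact (x_eq M l rS hl hrS0 hrS _ r ha hr).symm

lemma x_bot (M l rS : ℝ) (hl : 0 < l) (hrS0 : 0 < rS) (hrS : Fsads M l rS = 0) :
    Tendsto (xcoord M l) (nhdsWithin rS (Set.Ioi rS)) atBot := by
  set C : ℝ := (1 + 3*(rS+1)^2/l^2)/rS with hC
  have hCpos : 0 < C := by positivity
  have hFC : ∀ s, rS < s → s ≤ rS + 1 → Fsads M l s ≤ C * (s - rS) := by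
    intro s hs hs1
    have h0 : 0 < s := hrS0.trans hs
    rw [F_factor M l rS hl hrS0 hrS s h0]
    have h1 : (1 + (s^2 + s*rS + rS^2)/l^2) / s ≤ C := by
      rw [hC]
      have : s^2 + s*rS + rS^2 ≤ 3*(rS+1)^2 := by nlinarith
      gcongr
    calc _ = (1 + (s^2 + s*rS + rS^2)/l^2) / s * (s - rS) := by ring
      _ ≤ _ := mul_le_mul_of_nonneg_right h1 (by linarith)
  have hd : ∀ r, rS < r → HasDerivAt (fun r => xcoord M l r - C⁻¹ * Real.log (r - rS))
      ((Fsads M l r)⁻¹ - C⁻¹ * (1 / (r - rS))) r := by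
    intro r hr
    exact (x_deriv M l rS hl hrS0 hrS r hr).sub
      ((((hasDerivAt_id r).sub_const rS).log (sub_pos.2 hr).ne').const_mul _)
  have hm : MonotoneOn (fun r => xcoord M l r - C⁻¹ * Real.log (r - rS))
      (Set.Ioc rS (rS+1)) := by
    refine monotoneOn_of_deriv_nonneg (convex_Ioc _ _)
      (fun r hr => (hd r hr.1).continuousAt.continuousWithinAt)
      (fun r hr => ?_) (fun r hr => ?_)
    · rw [interior_Ioc] at hr
      exact (hd r hr.1).differentiableAt.differentiableWithinAt
    · rw [interior_Ioc] at hr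
      rw [(hd r hr.1).deriv, sub_nonneg, one_div, ← mul_inv]
      exact inv_anti₀ (F_pos M l rS hl hrS0 hrS r hr.1) (hFC r hr.1 hr.2.le)
  have hlog : Tendsto (fun r => xcoord M l (rS+1) + C⁻¹ * Real.log (r - rS))
      (nhdsWithin rS (Set.Ioi rS)) atBot := by
    refine tendsto_atBot_add_const_left _ _ (Tendsto.const_mul_atBot (inv_pos.2 hCpos) ?_)
    refine Real.tendsto_log_nhdsGT_zero.comp ?_
    refine tendsto_nhdsWithin_iff.2 ⟨?_, ?_⟩
    · have : Tendsto (fun r : ℝ => r - rS) (nhds rS) (nhds (rS - rS)) :=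
        tendsto_id.sub_const rS
      rw [sub_self] at this
      exact this.mono_left nhdsWithin_le_nhds
    · filter_upwards [self_mem_nhdsWithin] with r hr
      exact sub_pos.2 (Set.mem_Ioi.1 hr)
  refine tendsto_atBot_mono' _ ?_ hlog
  filter_upwards [Ioc_mem_nhdsGT (show rS < rS + 1 by linarith)] with r hr
  have := hm hr ⟨by linarith, le_rfl⟩ hr.2
  simp at this
  linarith

/-- `s ↦ 1/F(s)` is integrable on `(r₀,∞)` for every `r₀ > r_SAdS`, and the
Regge–Wheeler coordinate `x(r) = -∫_r^∞ F(s)⁻¹ ds` is a strictly increasing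
differentiable bijection from `(r_SAdS,∞)` onto `(-∞,0)` with derivative
`x'(r) = 1/F(r)`; moreover `x(r) → -∞` as `r → r_SAdS⁺` and `x(r) → 0` as `r → ∞`. -/
theorem stmt2 (M l rS : ℝ) (hM : 0 < M) (hl : 0 < l)
    (hrS0 : 0 < rS) (hrS : Fsads M l rS = 0) :
    (∀ r₀ : ℝ, rS < r₀ → IntegrableOn (fun s => (Fsads M l s)⁻¹) (Set.Ioi r₀)) ∧
    StrictMonoOn (xcoord M l) (Set.Ioi rS) ∧
    (∀ r ∈ Set.Ioi rS, HasDerivAt (xcoord M l) (Fsads M l r)⁻¹ r) ∧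
    Set.BijOn (xcoord M l) (Set.Ioi rS) (Set.Iio 0) ∧
    Tendsto (xcoord M l) (nhdsWithin rS (Set.Ioi rS)) atBot ∧
    Tendsto (xcoord M l) atTop (nhds 0) := by
  have hmono := x_mono M l rS hl hrS0 hrS
  have hder := x_deriv M l rS hl hrS0 hrS
  have hbot := x_bot M l rS hl hrS0 hrS
  have htop := x_top M l rS hl hrS0 hrS
  refine ⟨F_int M l rS hl hrS0 hrS, hmono, hder, ⟨?_, hmono.injOn, ?_⟩, hbot, htop⟩
  · intro r hr
    have hr : rS < r := hr
    have h1 : xcoord M l r < xcoord M l (r+1) :=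
      hmono hr (show rS < r + 1 by linarith) (by linarith)
    have h2 : xcoord M l (r+1) ≤ 0 := by
      refine ge_of_tendsto htop ?_
      filter_upwards [eventually_ge_atTop (r+1)] with u hu
      exact hmono.monotoneOn (show rS < r + 1 by linarith) (show rS < u by linarith) hu
    exact h1.trans_le h2
  · exact isPreconnected_Ioi.intermediate_value_Iio (l₁ := nhdsWithin rS (Set.Ioi rS))
      (l₂ := atTop) inf_le_right (le_principal_iff.2 (Ioi_mem_atTop rS))
      (fun r hr => (hder r hr).continuousAt.continuousWithinAt) hbot htop
end
end

section
/- With A(x) = F(r(x))^{1/2}/r(x) and B(x) = F(r(x))^{1/2}, one has A(x) → 1/l and B(x) + l/x → 0 as x → 0⁻. In particular B(x) - (-l/x) = o(1/|x|) as x → 0⁻. -/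
open MeasureTheory Filter Asymptotics

noncomputable section

/-- The potential `A(x) = F(r(x))^{1/2}/r(x)`, where `r(x)` is the inverse of the
Regge–Wheeler coordinate. -/
def Asads (M l : ℝ) (rx : ℝ → ℝ) (x : ℝ) : ℝ := Real.sqrt (Fsads M l (rx x)) / rx x

/-- The potential `B(x) = F(r(x))^{1/2}`. -/
def Bsads (M l : ℝ) (rx : ℝ → ℝ) (x : ℝ) : ℝ := Real.sqrt (Fsads M l (rx x))

lemma inv_sq_int (r c : ℝ) (hr : 0 < r) :
    IntegrableOn (fun s : ℝ => c * s ^ (-2:ℝ)) (Set.Ioi r) ∧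
    ∫ s in Set.Ioi r, c * s ^ (-2:ℝ) = c / r := by
  refine ⟨(integrableOn_Ioi_rpow_of_lt (by norm_num) hr).const_mul c, ?_⟩
  rw [integral_const_mul, integral_Ioi_rpow_of_lt (by norm_num) hr]
  have : (-2:ℝ) + 1 = -1 := by norm_num
  rw [this, Real.rpow_neg_one]
  field_simp

lemma Fsads_le (M l s : ℝ) (hM : 0 < M) (hs : 0 < s) : Fsads M l s ≤ 1 + s^2/l^2 := by
  unfold Fsads
  have : 0 < 2*M/s := by positivity
  linarith

lemma Fsads_ge (M l s : ℝ) (hM : 0 < M) (hs : 2*M ≤ s) : s^2/l^2 ≤ Fsads M l s := by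
  unfold Fsads
  have : 2*M/s ≤ 1 := by
    rw [div_le_one (by linarith)]; exact hs
  linarith

lemma Fsads_pos (M l rS s : ℝ) (hM : 0 < M) (hl : 0 < l) (h0 : 0 < rS)
    (hrS : Fsads M l rS = 0) (hs : rS < s) : 0 < Fsads M l s := by
  rw [← hrS]
  unfold Fsads
  have h1 : 2*M/s < 2*M/rS := by gcongr
  have h2 : rS^2/l^2 < s^2/l^2 := by gcongr
  linarith

lemma rpow_two_inv (s : ℝ) (hs : 0 < s) : s ^ (-2:ℝ) = (s^2)⁻¹ := by
  rw [Real.rpow_neg hs.le, Real.rpow_two]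

/-- lower bound on `-x` -/
lemma lower (M l rS r x : ℝ) (hM : 0 < M) (hl : 0 < l) (h0 : 0 < rS)
    (hrS : Fsads M l rS = 0) (hr : rS < r) (hx : xcoord M l r = x) (hx0 : x < 0) :
    l^2 * r / (l^2 + r^2) ≤ -x := by
  have hr0 : 0 < r := h0.trans hr
  have hI : ∫ s in Set.Ioi r, (Fsads M l s)⁻¹ = -x := by
    rw [← hx, xcoord, neg_neg]
  have hint : IntegrableOn (fun s => (Fsads M l s)⁻¹) (Set.Ioi r) := by
    by_contra h
    have := integral_undef h
    linarith
  obtain ⟨g1, g2⟩ := inv_sq_int r (1/r^2 + 1/l^2)⁻¹ hr0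
  rw [← hI]
  have e : l^2 * r / (l^2 + r^2) = (1/r^2 + 1/l^2)⁻¹ / r := by field_simp
  rw [e, ← g2]
  refine setIntegral_mono_on g1 hint measurableSet_Ioi ?_
  intro s hs
  have hs' : r < s := hs
  have hs0 : 0 < s := hr0.trans hs'
  rw [rpow_two_inv s hs0, ← mul_inv]
  apply inv_anti₀ (Fsads_pos M l rS s hM hl h0 hrS (hr.trans hs'))
  refine (Fsads_le M l s hM hs0).trans ?_
  have : 1 ≤ s^2 / r^2 := by
    rw [one_le_div (by positivity)]; gcongr
  calc 1 + s^2/l^2 ≤ s^2/r^2 + s^2/l^2 := by linarith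
    _ = _ := by ring

/-- upper bound on `-x` -/
lemma upper (M l r x : ℝ) (hM : 0 < M) (hl : 0 < l) 
    (hr : 2*M ≤ r) (hx : xcoord M l r = x) (hx0 : x < 0) :
    -x ≤ l^2 / r := by
  have hr0 : 0 < r := by linarith
  have hI : ∫ s in Set.Ioi r, (Fsads M l s)⁻¹ = -x := by
    rw [← hx, xcoord, neg_neg]
  have hint : IntegrableOn (fun s => (Fsads M l s)⁻¹) (Set.Ioi r) := by
    by_contra h
    have := integral_undef h
    linarith
  obtain ⟨g1, g2⟩ := inv_sq_int r (l^2) hr0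
  rw [← hI, ← g2]
  refine setIntegral_mono_on hint g1 measurableSet_Ioi ?_
  intro s hs
  have hs' : r < s := hs
  have hs0 : 0 < s := hr0.trans hs'
  rw [rpow_two_inv s hs0]
  have : l^2 * (s^2)⁻¹ = (s^2/l^2)⁻¹ := by field_simp
  rw [this]
  exact inv_anti₀ (by positivity) (Fsads_ge M l s hM (hr.trans hs'.le))

/-- `A(x) → 1/l` and `B(x) + l/x → 0` as `x → 0⁻`; in particular
`B(x) - (-l/x) = o(1/|x|)` as `x → 0⁻`. Here `rx` is the inverse of the
Regge–Wheeler coordinate on `(-∞,0)`. -/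
theorem stmt3 (M l rS : ℝ) (rx : ℝ → ℝ) (hM : 0 < M) (hl : 0 < l)
    (hrS0 : 0 < rS) (hrS : Fsads M l rS = 0)
    (hrx : ∀ x < (0:ℝ), rS < rx x ∧ xcoord M l (rx x) = x) :
    Tendsto (Asads M l rx) (nhdsWithin 0 (Set.Iio 0)) (nhds (1/l)) ∧
    Tendsto (fun x => Bsads M l rx x + l/x) (nhdsWithin 0 (Set.Iio 0)) (nhds 0) ∧
    (fun x => Bsads M l rx x - (-l/x)) =o[nhdsWithin 0 (Set.Iio 0)] (fun x => 1/|x|) := by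
  have hev : ∀ᶠ x : ℝ in nhdsWithin 0 (Set.Iio 0), x < 0 := self_mem_nhdsWithin
  have hinf : Tendsto rx (nhdsWithin 0 (Set.Iio 0)) atTop := by
    rw [tendsto_atTop]
    intro R
    have hc : -(l^2 * rS / (l^2 + R^2)) < 0 := by
      have : 0 < l^2 * rS / (l^2 + R^2) := by positivity
      linarith
    have h2 : ∀ᶠ x : ℝ in nhdsWithin 0 (Set.Iio 0), -(l^2 * rS / (l^2 + R^2)) < x :=
      nhdsWithin_le_nhds (lt_mem_nhds hc)
    filter_upwards [hev, h2] with x hx hx2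
    by_contra! hR
    obtain ⟨h1, h3⟩ := hrx x hx
    have h4 := lower M l rS (rx x) x hM hl hrS0 hrS h1 h3 hx
    have hp : 0 < rx x := hrS0.trans h1
    have : l^2 * rS / (l^2 + R^2) ≤ l^2 * rx x / (l^2 + (rx x)^2) := by gcongr
    linarith
  have hlr : Tendsto (fun x => l / rx x) (nhdsWithin 0 (Set.Iio 0)) (nhds 0) :=
    hinf.const_div_atTop l
  have key : ∀ᶠ x : ℝ in nhdsWithin 0 (Set.Iio 0), 0 < rx x ∧
      rx x / l ≤ Bsads M l rx x ∧ Bsads M l rx x ≤ rx x / l + l / rx x ∧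
      rx x / l ≤ -(l/x) ∧ -(l/x) ≤ rx x / l + l / rx x := by
    filter_upwards [hev, hinf.eventually_ge_atTop (2*M)] with x hx hr
    obtain ⟨h1, h3⟩ := hrx x hx
    have hp : 0 < rx x := hrS0.trans h1
    have h4 := lower M l rS (rx x) x hM hl hrS0 hrS h1 h3 hx
    have h5 := upper M l (rx x) x hM hl hr h3 hx
    have hx' : 0 < -x := by linarith
    have e : -(l/x) = l / (-x) := by rw [div_neg]
    refine ⟨hp, ?_, ?_, ?_, ?_⟩
    · apply Real.le_sqrt_of_sq_le
      rw [div_pow]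
      exact Fsads_ge M l _ hM hr
    · apply Real.sqrt_le_iff.2 ⟨by positivity, ?_⟩
      refine (Fsads_le M l _ hM hp).trans ?_
      have : (rx x / l + l / rx x)^2 = (rx x)^2/l^2 + 2 + (l / rx x)^2 := by
        field_simp
        ring
      rw [this]
      have := sq_nonneg (l / rx x)
      linarith
    · rw [e]
      calc rx x / l = l / (l^2 / rx x) := by field_simp
        _ ≤ _ := by gcongr
    · rw [e]
      calc l / (-x) ≤ l / (l^2 * rx x / (l^2 + (rx x)^2)) := by gcongr
        _ = _ := by field_simp; try ring
  have hB : Tendsto (fun x => Bsads M l rx x + l/x) (nhdsWithin 0 (Set.Iio 0)) (nhds 0) := by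
    apply squeeze_zero_norm' _ hlr
    filter_upwards [key] with x ⟨hp, a, b, c, d⟩
    rw [Real.norm_eq_abs, abs_le]
    constructor <;> linarith
  refine ⟨?_, hB, ?_⟩
  · have hup : Tendsto (fun x => 1/l + l / rx x * (1 / rx x)) (nhdsWithin 0 (Set.Iio 0))
        (nhds (1/l)) := by
      have := (hlr.mul (hinf.const_div_atTop 1)).const_add (1/l)
      simpa using this
    refine tendsto_of_tendsto_of_tendsto_of_le_of_le' tendsto_const_nhds hup ?_ ?_
    · filter_upwards [key] with x ⟨hp, a, b, c, d⟩
      change 1/l ≤ Bsads M l rx x / rx x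
      rw [le_div_iff₀ hp]
      calc 1/l * rx x = rx x / l := by ring
        _ ≤ _ := a
    · filter_upwards [key] with x ⟨hp, a, b, c, d⟩
      change Bsads M l rx x / rx x ≤ _
      rw [div_le_iff₀ hp]
      refine b.trans (le_of_eq ?_)
      field_simp
  · have h1 : (fun x => Bsads M l rx x - (-l/x)) =o[nhdsWithin 0 (Set.Iio 0)]
        (fun _ => (1:ℝ)) := by
      rw [isLittleO_one_iff]
      refine hB.congr fun x => ?_
      ring
    refine h1.trans_isBigO (IsBigO.of_bound 1 ?_)
    have h2 : ∀ᶠ x : ℝ in nhdsWithin 0 (Set.Iio 0), -1 < x :=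
      nhdsWithin_le_nhds (lt_mem_nhds (by norm_num))
    filter_upwards [hev, h2] with x hx hx2
    have : 0 < |x| := abs_pos.2 hx.ne
    rw [one_mul, norm_one, Real.norm_eq_abs, abs_of_pos (by positivity), one_le_div this,
      abs_of_neg hx]
    linarith
end
end

section
/- With κ = F'(r_SAdS)/2 > 0, there exist positive constants C_A and C_B such that e^{-κx} A(x) → C_A and e^{-κx} B(x) → C_B as x → -∞; in particular A(x) = C_A e^{κx} + o(e^{κx}) and B(x) = C_B e^{κx} + o(e^{κx}) as x → -∞. -/
open MeasureTheory Filter Asymptotics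

noncomputable section

/-- The surface gravity `κ = F'(r_SAdS)/2`. -/
def kappa (M l rS : ℝ) : ℝ := deriv (Fsads M l) rS / 2


def Qs (l a r : ℝ) : ℝ := r^2 + a*r + (a^2+l^2)

def cs (l a : ℝ) : ℝ := l^2*a/(3*a^2+l^2)

def ss (l a : ℝ) : ℝ := Real.sqrt (3*a^2+4*l^2)

def Ds (l a : ℝ) : ℝ := (l^2 - 2*cs l a*a + cs l a*a/2)*2/ss l a

def hs (l a r : ℝ) : ℝ := -(cs l a/2)*Real.log (Qs l a r) + Ds l a*Real.arctan ((2*r+a)/ss l a)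

def Gs (l a r : ℝ) : ℝ := cs l a*Real.log (r-a) + hs l a r

def ms (l a : ℝ) : ℝ := Ds l a*(Real.pi/2)

lemma Qs_pos {l a r : ℝ} (hl : 0 < l) (ha : 0 < a) (hr : 0 < r) : 0 < Qs l a r := by
  unfold Qs; positivity

lemma F_factor_s4 {M l a r : ℝ} (hl : 0 < l) (ha : 0 < a) (h : Fsads M l a = 0) (hr : 0 < r) :
    Fsads M l r = (r-a)*(Qs l a r/(l^2*r)) := by
  unfold Fsads at *
  unfold Qs
  field_simp at h ⊢
  nlinarith [h]

lemma kappa_eq {M l a : ℝ} (hl : 0 < l) (ha : 0 < a) (h : Fsads M l a = 0) :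
    kappa M l a = (3*a^2+l^2)/(2*l^2*a) := by
  have h1 : HasDerivAt (Fsads M l) (2*M/a^2 + 2*a/l^2) a := by
    have := (((hasDerivAt_const a (1:ℝ)).sub ((hasDerivAt_inv ha.ne').const_mul (2*M))).add
      ((hasDerivAt_pow 2 a).div_const (l^2)))
    refine (this.congr_deriv ?_).congr_of_eventuallyEq ?_
    · field_simp; norm_num; ring
    · exact Eventually.of_forall fun r => by simp [Fsads, div_eq_mul_inv]
  rw [kappa, h1.deriv]
  unfold Fsads at h
  field_simp at h ⊢
  nlinarith [h]

lemma hs_cont {l a : ℝ} (hl : 0 < l) (ha : 0 < a) : ContinuousAt (hs l a) a := by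
  have := Qs_pos hl ha ha
  have h2 : ContinuousAt (Qs l a) a := by unfold Qs; fun_prop
  have h3 : ContinuousAt (fun r => Real.log (Qs l a r)) a := h2.log this.ne'
  have h4 : ContinuousAt (fun r => Real.arctan ((2*r+a)/ss l a)) a :=
    Real.continuous_arctan.continuousAt.comp (by fun_prop)
  exact (h3.const_mul _).add (h4.const_mul _)

lemma Gs_deriv {M l a r : ℝ} (hl : 0 < l) (ha : 0 < a) (h : Fsads M l a = 0) (hr : a < r) :
    HasDerivAt (Gs l a) (Fsads M l r)⁻¹ r := by
  have hr0 : 0 < r := ha.trans hr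
  have hra : 0 < r - a := sub_pos.2 hr
  have hQ := Qs_pos hl ha hr0
  have hs0 : 0 < ss l a := Real.sqrt_pos.2 (by positivity)
  have hs2 : ss l a^2 = 3*a^2+4*l^2 := Real.sq_sqrt (by positivity)
  have d1 : HasDerivAt (fun r => Real.log (r-a)) (1/(r-a)) r :=
    ((hasDerivAt_id r).sub_const a).log hra.ne'
  have dQ : HasDerivAt (Qs l a) (2*r+a) r := by
    have := ((hasDerivAt_pow 2 r).add ((hasDerivAt_id r).const_mul a)).add_const (a^2+l^2)
    refine this.congr_deriv ?_
    norm_num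
  have d2 := dQ.log hQ.ne'
  have d3 : HasDerivAt (fun r => (2*r+a)/ss l a) (2/ss l a) r := by
    have := (((hasDerivAt_id r).const_mul 2).add_const a).div_const (ss l a)
    refine this.congr_deriv ?_
    norm_num
  have d4 := d3.arctan
  have := (d1.const_mul (cs l a)).add ((d2.const_mul (-(cs l a/2))).add (d4.const_mul (Ds l a)))
  refine this.congr_deriv ?_
  rw [F_factor_s4 hl ha h hr0]
  have e : 1/(1+((2*r+a)/ss l a)^2)*(2/ss l a) = ss l a/(2*Qs l a r) := by
    have : 1+((2*r+a)/ss l a)^2 = 4*Qs l a r/ss l a^2 := by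
      field_simp
      rw [hs2]; unfold Qs; ring
    rw [this]; field_simp; norm_num
  rw [e]
  unfold Ds
  have e2 : (l^2 - 2*cs l a*a + cs l a*a/2)*2/ss l a*(ss l a/(2*Qs l a r))
     = (l^2 - 2*cs l a*a + cs l a*a/2)/Qs l a r := by field_simp
  rw [e2]
  have hp : 0 < 3*a^2+l^2 := by positivity
  unfold cs
  field_simp
  unfold Qs
  ring

lemma Gs_tendsto {l a : ℝ} (hl : 0 < l) (ha : 0 < a) :
    Tendsto (Gs l a) atTop (nhds (ms l a)) := by
  have hs0 : 0 < ss l a := Real.sqrt_pos.2 (by positivity)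
  have hi : Tendsto (fun r:ℝ => r⁻¹) atTop (nhds 0) := tendsto_inv_atTop_zero
  have h1 : Tendsto (fun r:ℝ => (1-a*r⁻¹)^2/(1+a*r⁻¹+(a^2+l^2)*(r⁻¹)^2)) atTop (nhds 1) := by
    have hc : ContinuousAt (fun u:ℝ => (1-a*u)^2/(1+a*u+(a^2+l^2)*u^2)) 0 := by
      apply ContinuousAt.div (by fun_prop) (by fun_prop); norm_num
    have := hc.tendsto.comp hi
    simpa [Function.comp_def] using this
  have h2 := (h1.log one_ne_zero).const_mul (cs l a/2)
  have h3 : Tendsto (fun r => Real.arctan ((2*r+a)/ss l a)) atTop (nhds (Real.pi/2)) := by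
    have : Tendsto (fun r:ℝ => (2*r+a)/ss l a) atTop atTop :=
      (tendsto_atTop_add_const_right _ _ (tendsto_id.const_mul_atTop two_pos)).atTop_div_const hs0
    exact (Real.tendsto_arctan_atTop.mono_right nhdsWithin_le_nhds).comp this
  have h4 := h2.add (h3.const_mul (Ds l a))
  rw [Real.log_one, mul_zero, zero_add] at h4
  refine h4.congr' ?_
  filter_upwards [eventually_gt_atTop a] with r hr
  have hr0 : 0 < r := ha.trans hr
  have hra : 0 < r - a := sub_pos.2 hr
  have hQ := Qs_pos hl ha hr0
  have : (1-a*r⁻¹)^2/(1+a*r⁻¹+(a^2+l^2)*(r⁻¹)^2) = (r-a)^2/Qs l a r := by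
    have e1 : (1-a*r⁻¹)^2 = (r-a)^2/r^2 := by field_simp
    have e2 : (1+a*r⁻¹+(a^2+l^2)*(r⁻¹)^2) = Qs l a r/r^2 := by unfold Qs; field_simp
    rw [e1, e2]; field_simp
  rw [this, Real.log_div (by positivity) hQ.ne', Real.log_pow]
  unfold Gs hs
  push_cast; ring

lemma Finv_nonneg {M l a r : ℝ} (hl : 0 < l) (ha : 0 < a) (h : Fsads M l a = 0) (hr : a < r) :
    0 ≤ (Fsads M l r)⁻¹ := by
  have hr0 : 0 < r := ha.trans hr
  have hra : 0 < r - a := sub_pos.2 hr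
  have hQ := Qs_pos hl ha hr0
  rw [F_factor_s4 hl ha h hr0]; positivity

lemma xcoord_eq {M l a r : ℝ} (hl : 0 < l) (ha : 0 < a) (h : Fsads M l a = 0) (hr : a < r) :
    xcoord M l r = Gs l a r - ms l a := by
  have := integral_Ioi_of_hasDerivAt_of_nonneg' (a := r) (g := Gs l a)
    (g' := fun s => (Fsads M l s)⁻¹)
    (fun s hs => Gs_deriv hl ha h (hr.trans_le hs))
    (fun s hs => Finv_nonneg hl ha h (hr.trans hs)) (Gs_tendsto hl ha)
  rw [xcoord, this]; ring

lemma Gs_mono {M l a : ℝ} (hl : 0 < l) (ha : 0 < a) (h : Fsads M l a = 0) :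
    MonotoneOn (Gs l a) (Set.Ioi a) := by
  apply monotoneOn_of_deriv_nonneg (convex_Ioi a)
  · exact fun r hr => (Gs_deriv hl ha h hr).continuousAt.continuousWithinAt
  · intro r hr
    rw [interior_Ioi] at hr
    exact (Gs_deriv hl ha h hr).differentiableAt.differentiableWithinAt
  · intro r hr
    rw [interior_Ioi] at hr
    rw [(Gs_deriv hl ha h hr).deriv]
    exact Finv_nonneg hl ha h hr

lemma rx_tendsto {M l a : ℝ} {rx : ℝ → ℝ} (hl : 0 < l) (ha : 0 < a) (h : Fsads M l a = 0)
    (hrx : ∀ x < (0:ℝ), a < rx x ∧ xcoord M l (rx x) = x) :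
    Tendsto rx atBot (nhds a) := by
  rw [tendsto_order]
  constructor
  · intro b hb
    filter_upwards [eventually_lt_atBot 0] with x hx
    exact hb.trans (hrx x hx).1
  · intro b hb
    filter_upwards [eventually_lt_atBot 0, eventually_lt_atBot (Gs l a b - ms l a)] with x hx hx2
    obtain ⟨h1, h2⟩ := hrx x hx
    by_contra! hc
    have := Gs_mono hl ha h hb h1 hc
    rw [xcoord_eq hl ha h h1] at h2
    linarith

lemma littleO_aux (k C : ℝ) (f : ℝ → ℝ)
    (h : Tendsto (fun x => Real.exp (-k * x) * f x) atBot (nhds C)) :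
    (fun x => f x - C * Real.exp (k * x)) =o[atBot] (fun x => Real.exp (k * x)) := by
  rw [isLittleO_iff_tendsto (fun x hx => absurd hx (Real.exp_pos _).ne')]
  have := h.sub_const C
  rw [sub_self] at this
  refine this.congr fun x => ?_
  rw [neg_mul, Real.exp_neg]
  field_simp

/-- With `κ = F'(r_SAdS)/2 > 0` there exist positive constants `C_A`, `C_B` with
`e^{-κx}A(x) → C_A` and `e^{-κx}B(x) → C_B` as `x → -∞`; in particular
`A(x) = C_A e^{κx} + o(e^{κx})` and `B(x) = C_B e^{κx} + o(e^{κx})` as `x → -∞`. -/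
theorem stmt4 (M l rS : ℝ) (rx : ℝ → ℝ) (hM : 0 < M) (hl : 0 < l)
    (hrS0 : 0 < rS) (hrS : Fsads M l rS = 0)
    (hrx : ∀ x < (0:ℝ), rS < rx x ∧ xcoord M l (rx x) = x) :
    0 < kappa M l rS ∧
    ∃ CA > (0:ℝ), ∃ CB > (0:ℝ),
      Tendsto (fun x => Real.exp (-(kappa M l rS) * x) * Asads M l rx x) atBot (nhds CA) ∧
      Tendsto (fun x => Real.exp (-(kappa M l rS) * x) * Bsads M l rx x) atBot (nhds CB) ∧
      (fun x => Asads M l rx x - CA * Real.exp (kappa M l rS * x))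
        =o[atBot] (fun x => Real.exp (kappa M l rS * x)) ∧
      (fun x => Bsads M l rx x - CB * Real.exp (kappa M l rS * x))
        =o[atBot] (fun x => Real.exp (kappa M l rS * x)) := by
  have hk := kappa_eq hl hrS0 hrS
  have hkpos : 0 < kappa M l rS := by rw [hk]; positivity
  have hkc : kappa M l rS * cs l rS = 1/2 := by
    rw [hk]; unfold cs; field_simp
  have hQ := Qs_pos hl hrS0 hrS0
  have ht := rx_tendsto hl hrS0 hrS hrx
  have hcB : ContinuousAt (fun r => Real.exp (-(kappa M l rS) * (hs l rS r - ms l rS)) *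
      Real.sqrt (Qs l rS r/(l^2*r))) rS := by
    have c1 := hs_cont hl hrS0
    have c2 : ContinuousAt (fun r => Qs l rS r/(l^2*r)) rS := by
      apply ContinuousAt.div _ (by fun_prop) (by positivity)
      unfold Qs; fun_prop
    have c3 : ContinuousAt (fun r => -(kappa M l rS) * (hs l rS r - ms l rS)) rS :=
      (c1.sub continuousAt_const).const_mul _
    exact (Real.continuous_exp.continuousAt.comp c3).mul c2.sqrt
  have hB : Tendsto (fun x => Real.exp (-(kappa M l rS) * x) * Bsads M l rx x) atBot
      (nhds (Real.exp (-(kappa M l rS) * (hs l rS rS - ms l rS)) *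
        Real.sqrt (Qs l rS rS/(l^2*rS)))) := by
    refine (hcB.tendsto.comp ht).congr' ?_
    filter_upwards [eventually_lt_atBot 0] with x hx
    obtain ⟨h1, h2⟩ := hrx x hx
    have hr0 : 0 < rx x := hrS0.trans h1
    have hra : 0 < rx x - rS := sub_pos.2 h1
    rw [xcoord_eq hl hrS0 hrS h1] at h2
    have e1 : -(kappa M l rS) * x = -(kappa M l rS) * (hs l rS (rx x) - ms l rS)
        - Real.log (rx x - rS) / 2 := by
      conv_lhs => rw [← h2]
      unfold Gs
      linear_combination (-Real.log (rx x - rS)) * hkc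
    have e2 : Real.exp (Real.log (rx x - rS) / 2) = Real.sqrt (rx x - rS) := by
      rw [Real.exp_half, Real.exp_log hra]
    have hsq : 0 < Real.sqrt (rx x - rS) := Real.sqrt_pos.2 hra
    rw [e1, Real.exp_sub, e2, Bsads, F_factor_s4 hl hrS0 hrS hr0, Real.sqrt_mul hra.le]
    simp only [Function.comp]
    field_simp
  have hA : Tendsto (fun x => Real.exp (-(kappa M l rS) * x) * Asads M l rx x) atBot
      (nhds (Real.exp (-(kappa M l rS) * (hs l rS rS - ms l rS)) *
        Real.sqrt (Qs l rS rS/(l^2*rS)) / rS)) := by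
    refine (hB.div ht hrS0.ne').congr fun x => ?_
    simp only [Asads, Bsads, Pi.div_apply, mul_div_assoc]
  have hCB : 0 < Real.exp (-(kappa M l rS) * (hs l rS rS - ms l rS)) *
        Real.sqrt (Qs l rS rS/(l^2*rS)) :=
    mul_pos (Real.exp_pos _) (Real.sqrt_pos.2 (by positivity))
  exact ⟨hkpos, _, div_pos hCB hrS0, _, hCB, hA, hB, littleO_aux _ _ _ hA, littleO_aux _ _ _ hB⟩
end
end
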